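/- Assume the SOSC holds with respect to J. Then ∫_F |ln d(y, ℝ^d ∖ J)| dμ_F(y) < ∞; in particular d(y, ℝ^d ∖ J) > 0 for μ_F-almost every y ∈ F. -/

import Mathlib

open MeasureTheory Metric Filter Set
open scoped ENNReal Topology

/-!
Put `f y = -log d(y, Jᶜ)`, with value `∞` where the distance vanishes. Since `S_i J ⊆ J` and `S_i`
is a surjective similarity, `f (S_i y) ≤ f y + log (1 / r_i)`. By the SOSC some word map `S_w` sends
`F` into a small ball around a point of `F ∩ int J`, on which `f` is bounded. Splitting
`F = ⋃_v S_v F` over all words `v` of the length of `w`, and writing `p_v = r_v ^ D`, so that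
`∑ p_v = 1`, the scaling property of `H^D` gives
`∫_F f ≤ p_w · const + (1 - p_w) · (∫_F f + const)`.
As `p_w > 0`, this bounds `∫_F f`, once it is applied to the truncations `min f m`, whose integrals
are finite because `H^D(F) < ∞`.
-/

open scoped NNReal

section NegLog

/-- `max (-log t) 0` as an extended nonnegative number, with the value `∞` (instead of the junk
values of `Real.log`) at `t ≤ 0`. -/
noncomputable def negLog (t : ℝ) : ℝ≥0∞ :=
  if t ≤ 0 then ∞ else ENNReal.ofReal (-Real.log t)

lemma negLog_of_nonpos {t : ℝ} (ht : t ≤ 0) : negLog t = ∞ := if_pos ht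

lemma negLog_of_pos {t : ℝ} (ht : 0 < t) : negLog t = ENNReal.ofReal (-Real.log t) :=
  if_neg ht.not_ge

lemma negLog_lt_top_iff {t : ℝ} : negLog t < ∞ ↔ 0 < t := by
  rcases le_or_gt t 0 with ht | ht
  · simp [negLog_of_nonpos ht, ht]
  · simp [negLog_of_pos ht, ht]

lemma negLog_le_add_of_le_mul {s t K : ℝ} (hK : 0 ≤ K) (h : s ≤ K * t) :
    negLog t ≤ negLog s + ENNReal.ofReal (Real.log K) := by
  rcases le_or_gt s 0 with hs | hs
  · simp [negLog_of_nonpos hs]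
  have hKt : 0 < K * t := hs.trans_le h
  have ht : 0 < t := pos_of_mul_pos_right hKt hK
  have hK' : 0 < K := pos_of_mul_pos_left hKt ht.le
  have hlog : Real.log s ≤ Real.log K + Real.log t := by
    rw [← Real.log_mul hK'.ne' ht.ne']
    exact Real.log_le_log hs h
  rw [negLog_of_pos hs, negLog_of_pos ht]
  exact (ENNReal.ofReal_le_ofReal (by linarith)).trans ENNReal.ofReal_add_le

lemma antitone_negLog : Antitone negLog := fun s t h ↦ by
  simpa using negLog_le_add_of_le_mul zero_le_one (h.trans_eq (one_mul t).symm)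

lemma ofReal_abs_log_le_negLog_add {t M : ℝ} (h : t ≤ M) :
    ENNReal.ofReal |Real.log t| ≤ negLog t + ENNReal.ofReal (Real.log M) := by
  rcases le_or_gt t 0 with ht | ht
  · simp [negLog_of_nonpos ht]
  rw [negLog_of_pos ht]
  rcases abs_choice (Real.log t) with habs | habs <;> rw [habs]
  · exact (ENNReal.ofReal_le_ofReal (Real.log_le_log ht h)).trans le_add_self
  · exact le_self_add

end NegLog

section Distance

variable {X : Type*} [PseudoMetricSpace X] {S : X → X} {J : Set X}

lemma measurable_negLog_infDist [MeasurableSpace X] [OpensMeasurableSpace X] (A : Set X) :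
    Measurable fun y ↦ negLog (infDist y A) :=
  antitone_negLog.measurable.comp measurable_infDist

lemma exists_eventually_negLog_infDist_compl_le (hJ : Jᶜ.Nonempty) {x : X} (hx : x ∈ interior J) :
    ∃ C ≠ ∞, ∀ᶠ y in 𝓝 x, negLog (infDist y Jᶜ) ≤ C := by
  have hpos : 0 < infDist x Jᶜ := by
    rwa [← infDist_pos_iff_notMem_closure hJ, closure_compl, notMem_compl_iff]
  refine ⟨negLog (infDist x Jᶜ / 2), (negLog_lt_top_iff.2 (half_pos hpos)).ne, ?_⟩
  filter_upwards [(continuous_infDist_pt Jᶜ).continuousAt.eventually_const_lt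
    (half_lt_self hpos)] with y hy
  exact antitone_negLog hy.le

lemma infDist_compl_le_mul_infDist_compl {K : ℝ≥0} (hS : AntilipschitzWith K S)
    (hsurj : Function.Surjective S) (hJS : MapsTo S J J) (hJ : Jᶜ.Nonempty) (y : X) :
    infDist y Jᶜ ≤ K * infDist (S y) Jᶜ := by
  have : Nonempty ↥Jᶜ := hJ.to_subtype
  rw [infDist_eq_iInf (s := Jᶜ) (x := S y), Real.mul_iInf_of_nonneg K.coe_nonneg]
  refine le_ciInf fun ⟨z, hz⟩ ↦ ?_
  obtain ⟨u, rfl⟩ := hsurj z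
  exact (infDist_le_dist_of_mem (s := Jᶜ) fun hu ↦ hz (hJS hu)).trans (hS.le_mul_dist y u)

lemma lipschitzWith_toNNReal_of_dist_eq_mul {r : ℝ} (hr : 0 ≤ r)
    (hS : ∀ x y, dist (S x) (S y) = r * dist x y) : LipschitzWith r.toNNReal S :=
  .of_dist_le_mul fun x y ↦ by rw [hS, Real.coe_toNNReal r hr]

lemma antilipschitzWith_toNNReal_inv_of_dist_eq_mul {r : ℝ} (hr : 0 < r)
    (hS : ∀ x y, dist (S x) (S y) = r * dist x y) : AntilipschitzWith r.toNNReal⁻¹ S :=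
  .of_le_mul_dist fun x y ↦ by
    rw [hS, NNReal.coe_inv, Real.coe_toNNReal r hr.le, inv_mul_cancel_left₀ hr.ne']

lemma surjective_of_dist_eq_mul {E : Type*} [NormedAddCommGroup E] [NormedSpace ℝ E]
    [StrictConvexSpace ℝ E] [FiniteDimensional ℝ E] {S : E → E} {r : ℝ} (hr : 0 < r)
    (hS : ∀ x y, dist (S x) (S y) = r * dist x y) : Function.Surjective S := by
  have hiso : Isometry fun x ↦ r⁻¹ • S x := Isometry.of_dist_eq fun x y ↦ by
    rw [dist_smul₀, hS, Real.norm_of_nonneg (inv_nonneg.2 hr.le), inv_mul_cancel_left₀ hr.ne']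
  have : Inhabited E := ⟨0⟩
  intro z
  obtain ⟨x, hx⟩ :=
    (hiso.affineIsometryOfStrictConvexSpace.toAffineIsometryEquiv rfl).surjective (r⁻¹ • z)
  exact ⟨x, smul_right_injective E (inv_ne_zero hr.ne') hx⟩

end Distance

section Integral

lemma mul_le_add_of_le_mul_add_mul_add {I A B p q : ℝ≥0∞} (hI : I ≠ ∞) (hpq : p + q ≤ 1)
    (h : I ≤ p * A + q * (I + B)) : p * I ≤ A + B := by
  have hp : p ≤ 1 := le_self_add.trans hpq
  have hq : q ≤ 1 := le_add_self.trans hpq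
  have hqI : q * I ≠ ∞ := ENNReal.mul_ne_top (hq.trans_lt ENNReal.one_lt_top).ne hI
  refine (ENNReal.add_le_add_iff_left hqI).1 ?_
  calc q * I + p * I = (p + q) * I := by ring
    _ ≤ I := mul_le_of_le_one_left' hpq
    _ ≤ p * A + q * (I + B) := h
    _ = q * I + (p * A + q * B) := by ring
    _ ≤ q * I + (A + B) := by
      gcongr
      · exact mul_le_of_le_one_left' hp
      · exact mul_le_of_le_one_left' hq

variable {α : Type*} [MeasurableSpace α] {μ : Measure α} {f : α → ℝ≥0∞}

lemma lintegral_eq_iSup_lintegral_min_natCast (hf : Measurable f) :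
    ∫⁻ x, f x ∂μ = ⨆ m : ℕ, ∫⁻ x, min (f x) m ∂μ := by
  rw [← lintegral_iSup (fun m ↦ hf.min measurable_const)
    fun _ _ h x ↦ min_le_min_left (f x) (Nat.cast_le.2 h)]
  refine lintegral_congr fun x ↦ ?_
  rw [← inf_iSup_eq, ENNReal.iSup_natCast, inf_top_eq]

lemma lintegral_inv_smul_restrict_lt_top {s : Set α} (h : ∫⁻ x in s, f x ∂μ < ∞) :
    ∫⁻ x, f x ∂((μ s)⁻¹ • μ.restrict s) < ∞ := by
  rcases eq_or_ne (μ s) 0 with hs | hs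
  · simp [Measure.restrict_eq_zero.2 hs]
  · rw [lintegral_smul_measure]
    exact ENNReal.mul_lt_top (ENNReal.inv_lt_top.2 (pos_iff_ne_zero.2 hs)) h

lemma setLIntegral_image_hausdorffMeasure_le {X Y : Type*} [EMetricSpace X] [MeasurableSpace X]
    [BorelSpace X] [EMetricSpace Y] [MeasurableSpace Y] [BorelSpace Y] {S : X → Y} {K : ℝ≥0}
    (hS : LipschitzWith K S) {D : ℝ} (hD : 0 ≤ D) (F : Set X) {f : Y → ℝ≥0∞} (hf : Measurable f) :
    ∫⁻ y in S '' F, f y ∂μH[D] ≤ (K : ℝ≥0∞) ^ D * ∫⁻ x in F, f (S x) ∂μH[D] := by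
  have hSm : Measurable S := hS.continuous.measurable
  have hmeas : μH[D].restrict (S '' F) ≤ (K : ℝ≥0∞) ^ D • (μH[D].restrict F).map S := by
    refine Measure.le_iff.2 fun A hA ↦ ?_
    rw [Measure.restrict_apply hA, Measure.smul_apply, Measure.map_apply hSm hA,
      Measure.restrict_apply (hSm hA), smul_eq_mul, inter_comm, ← image_inter_preimage, inter_comm]
    exact hS.hausdorffMeasure_image_le hD _
  calc ∫⁻ y in S '' F, f y ∂μH[D]
      ≤ ∫⁻ y, f y ∂((K : ℝ≥0∞) ^ D • (μH[D].restrict F).map S) := lintegral_mono' hmeas le_rfl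
    _ = (K : ℝ≥0∞) ^ D * ∫⁻ x in F, f (S x) ∂μH[D] := by
      rw [lintegral_smul_measure, lintegral_map hf hSm, smul_eq_mul]

end Integral

section WordMap

variable {X ι : Type*} {S : ι → X → X}

/-- The composition `S_{w_0} ∘ ⋯ ∘ S_{w_{n-1}}` along a word `w` of length `n`. -/
def wordMap (S : ι → X → X) : {n : ℕ} → (Fin n → ι) → X → X
  | 0, _ => id
  | _ + 1, w => S (w 0) ∘ wordMap S (Fin.tail w)

lemma wordMap_cons {n : ℕ} (i : ι) (w : Fin n → ι) (x : X) :
    wordMap S (Fin.cons i w : Fin (n + 1) → ι) x = S i (wordMap S w x) := rfl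

lemma lipschitzWith_wordMap [PseudoEMetricSpace X] {r : ι → ℝ≥0}
    (hS : ∀ i, LipschitzWith (r i) (S i)) {n : ℕ} (w : Fin n → ι) :
    LipschitzWith (∏ k, r (w k)) (wordMap S w) := by
  induction n with
  | zero => simpa [wordMap] using LipschitzWith.id
  | succ n ih =>
    rw [Fin.prod_univ_succ]
    exact (hS (w 0)).comp (ih (Fin.tail w))

lemma subset_iUnion_image_wordMap {F : Set X} (hF : F ⊆ ⋃ i, S i '' F) (n : ℕ) :
    F ⊆ ⋃ w : Fin n → ι, wordMap S w '' F := by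
  induction n with
  | zero => exact fun x hx ↦ mem_iUnion.2 ⟨Fin.elim0, x, hx, rfl⟩
  | succ n ih =>
    intro x hx
    obtain ⟨i, y, hy, rfl⟩ := mem_iUnion.1 (hF hx)
    obtain ⟨w, z, hz, rfl⟩ := mem_iUnion.1 (ih hy)
    exact mem_iUnion.2 ⟨Fin.cons i w, z, hz, wordMap_cons i w z⟩

lemma comp_wordMap_le_add {f : X → ℝ≥0∞} {l : ℝ≥0∞} (hf : ∀ i y, f (S i y) ≤ f y + l) {n : ℕ}
    (w : Fin n → ι) (y : X) : f (wordMap S w y) ≤ f y + n * l := by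
  induction n with
  | zero => simp [wordMap]
  | succ n ih =>
    calc f (wordMap S w y) ≤ f (wordMap S (Fin.tail w) y) + l := hf (w 0) _
      _ ≤ f y + n * l + l := by gcongr; exact ih (Fin.tail w)
      _ = f y + (n + 1 : ℕ) * l := by push_cast; ring

lemma exists_lt_one_forall_prod_le_pow [Finite ι] {r : ι → ℝ≥0} (hr : ∀ i, r i < 1) :
    ∃ R < 1, ∀ (n : ℕ) (w : Fin n → ι), ∏ k, r (w k) ≤ R ^ n := by
  cases nonempty_fintype ι
  refine ⟨Finset.univ.sup r, (Finset.sup_lt_iff zero_lt_one).2 fun i _ ↦ hr i, fun n w ↦ ?_⟩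
  simpa using Finset.prod_le_pow_card Finset.univ (fun k ↦ r (w k)) _
    fun k _ ↦ Finset.le_sup (Finset.mem_univ (w k))

end WordMap

/-- `F` is sub-self-similar (in the sense of Falconer) for Lipschitz maps `S i` with constants
`r i`, and the exponent `D` is at least the similarity dimension of the `r i`. -/
structure IsSubSelfSimilar {X ι : Type*} [PseudoEMetricSpace X] [Fintype ι] (S : ι → X → X)
    (r : ι → ℝ≥0) (D : ℝ) (F : Set X) : Prop where
  lipschitzWith : ∀ i, LipschitzWith (r i) (S i)
  ratio_ne_zero : ∀ i, r i ≠ 0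
  exponent_nonneg : 0 ≤ D
  sum_rpow_le_one : ∑ i, r i ^ D ≤ 1
  subset_iUnion_image : F ⊆ ⋃ i, S i '' F

namespace IsSubSelfSimilar

variable {X ι : Type*} [Fintype ι] {S : ι → X → X} {r : ι → ℝ≥0} {D : ℝ} {F : Set X}

section PseudoEMetricSpace

variable [PseudoEMetricSpace X]

lemma sum_coe_rpow_le_one (h : IsSubSelfSimilar S r D F) : ∑ i, (r i : ℝ≥0∞) ^ D ≤ 1 := by
  simp only [← ENNReal.coe_rpow_of_nonneg _ h.exponent_nonneg]
  exact_mod_cast h.sum_rpow_le_one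

lemma sum_ediam_image_rpow_le (h : IsSubSelfSimilar S r D F) :
    ∑ i, ediam (S i '' F) ^ D ≤ ediam F ^ D := calc
  ∑ i, ediam (S i '' F) ^ D ≤ ∑ i, (r i : ℝ≥0∞) ^ D * ediam F ^ D := by
    simp only [← ENNReal.mul_rpow_of_nonneg _ _ h.exponent_nonneg]
    exact Finset.sum_le_sum fun i _ ↦
      ENNReal.rpow_le_rpow ((h.lipschitzWith i).ediam_image_le F) h.exponent_nonneg
  _ ≤ ediam F ^ D := by
    rw [← Finset.sum_mul]
    exact mul_le_of_le_one_left' h.sum_coe_rpow_le_one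

lemma iterate (h : IsSubSelfSimilar S r D F) (n : ℕ) :
    IsSubSelfSimilar (fun w : Fin n → ι ↦ wordMap S w) (fun w ↦ ∏ k, r (w k)) D F where
  lipschitzWith := lipschitzWith_wordMap h.lipschitzWith
  ratio_ne_zero w := Finset.prod_ne_zero_iff.2 fun k _ ↦ h.ratio_ne_zero (w k)
  exponent_nonneg := h.exponent_nonneg
  sum_rpow_le_one := by
    simp only [← NNReal.finsetProd_rpow]
    rw [← Fintype.sum_pow (fun i ↦ r i ^ D)]
    exact pow_le_one' h.sum_rpow_le_one n
  subset_iUnion_image := subset_iUnion_image_wordMap h.subset_iUnion_image n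

end PseudoEMetricSpace

section PseudoMetricSpace

variable [PseudoMetricSpace X]

lemma of_dist_eq_mul {ρ : ι → ℝ} (hρ : ∀ i, 0 < ρ i)
    (hS : ∀ i x y, dist (S i x) (S i y) = ρ i * dist x y) (hD : 0 ≤ D) (hsum : ∑ i, ρ i ^ D ≤ 1)
    (hF : F ⊆ ⋃ i, S i '' F) : IsSubSelfSimilar S (fun i ↦ (ρ i).toNNReal) D F where
  lipschitzWith i := lipschitzWith_toNNReal_of_dist_eq_mul (hρ i).le (hS i)
  ratio_ne_zero i := (Real.toNNReal_pos.2 (hρ i)).ne'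
  exponent_nonneg := hD
  sum_rpow_le_one := NNReal.coe_le_coe.1 <| by
    simpa only [NNReal.coe_one, NNReal.coe_sum, NNReal.coe_rpow, Real.coe_toNNReal _ (hρ _).le]
      using hsum
  subset_iUnion_image := hF

lemma exists_mapsTo_wordMap_of_mem_nhds (h : IsSubSelfSimilar S r D F) (hr : ∀ i, r i < 1)
    (hF : Bornology.IsBounded F) {x : X} (hx : x ∈ F) {U : Set X} (hU : U ∈ 𝓝 x) :
    ∃ (n : ℕ) (w : Fin n → ι), MapsTo (wordMap S w) F U := by
  obtain ⟨ε, hε, hεU⟩ := Metric.mem_nhds_iff.1 hU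
  obtain ⟨R, hR, hprod⟩ := exists_lt_one_forall_prod_le_pow hr
  have hlim : Tendsto (fun n : ℕ ↦ (R : ℝ) ^ n * diam F) atTop (𝓝 0) := by
    simpa using (tendsto_pow_atTop_nhds_zero_of_lt_one R.coe_nonneg hR).mul_const (diam F)
  obtain ⟨n, hn⟩ := (hlim.eventually_lt_const hε).exists
  obtain ⟨w, z, hz, rfl⟩ := mem_iUnion.1 ((h.iterate n).subset_iUnion_image hx)
  refine ⟨n, w, fun y hy ↦ hεU (lt_of_le_of_lt ?_ hn)⟩
  calc dist (wordMap S w y) (wordMap S w z)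
      ≤ (∏ k, r (w k) : ℝ≥0) * dist y z := ((h.iterate n).lipschitzWith w).dist_le_mul y z
    _ ≤ (R : ℝ) ^ n * diam F := by
      gcongr
      · exact_mod_cast hprod n w
      · exact dist_le_diam_of_mem hF hy hz

end PseudoMetricSpace

section HausdorffMeasure

variable [MetricSpace X] [MeasurableSpace X] [BorelSpace X]

lemma hausdorffMeasure_lt_top (h : IsSubSelfSimilar S r D F) (hr : ∀ i, r i < 1)
    (hF : Bornology.IsBounded F) : μH[D] F < ∞ := by
  obtain ⟨R, hR, hprod⟩ := exists_lt_one_forall_prod_le_pow hr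
  have hdiam : ediam F ≠ ∞ := hF.ediam_ne_top
  have hlim : Tendsto (fun n : ℕ ↦ (R : ℝ≥0∞) ^ n * ediam F) atTop (𝓝 0) := by
    simpa using ENNReal.Tendsto.mul_const
      (ENNReal.tendsto_pow_atTop_nhds_zero_of_lt_one (ENNReal.coe_lt_one_iff.2 hR)) (.inr hdiam)
  have hsmall (n : ℕ) (w : Fin n → ι) :
      ediam (wordMap S w '' F) ≤ (R : ℝ≥0∞) ^ n * ediam F :=
    (((h.iterate n).lipschitzWith w).ediam_image_le F).trans
      (by gcongr; exact_mod_cast hprod n w)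
  calc μH[D] F
      ≤ liminf (fun n ↦ ∑ w : Fin n → ι, ediam (wordMap S w '' F) ^ D) atTop :=
        Measure.hausdorffMeasure_le_liminf_sum D F _ hlim _ (.of_forall hsmall)
          (.of_forall fun n ↦ (h.iterate n).subset_iUnion_image)
    _ ≤ ediam F ^ D := liminf_le_of_le (by isBoundedDefault) fun b hb ↦
        let ⟨n, hn⟩ := hb.exists
        hn.trans (h.iterate n).sum_ediam_image_rpow_le
    _ < ∞ := ENNReal.rpow_lt_top_of_nonneg h.exponent_nonneg hdiam

lemma setLIntegral_le_sum (h : IsSubSelfSimilar S r D F) {f : X → ℝ≥0∞} (hf : Measurable f) :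
    ∫⁻ y in F, f y ∂μH[D] ≤ ∑ i, (r i : ℝ≥0∞) ^ D * ∫⁻ y in F, f (S i y) ∂μH[D] := calc
  ∫⁻ y in F, f y ∂μH[D]
    ≤ ∫⁻ y in ⋃ i, S i '' F, f y ∂μH[D] := lintegral_mono_set h.subset_iUnion_image
  _ ≤ ∑ i, ∫⁻ y in S i '' F, f y ∂μH[D] := by
    rw [← tsum_fintype (L := .unconditional ι)]
    exact lintegral_iUnion_le _ f
  _ ≤ ∑ i, (r i : ℝ≥0∞) ^ D * ∫⁻ y in F, f (S i y) ∂μH[D] := Finset.sum_le_sum fun i _ ↦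
    setLIntegral_image_hausdorffMeasure_le (h.lipschitzWith i) h.exponent_nonneg F hf

lemma rpow_mul_setLIntegral_le_of_ne_top (h : IsSubSelfSimilar S r D F) {f : X → ℝ≥0∞}
    (hf : Measurable f) {C L : ℝ≥0∞} (hL : ∀ i y, f (S i y) ≤ f y + L) {j : ι}
    (hC : ∀ y ∈ F, f (S j y) ≤ C) (hfin : ∫⁻ y in F, f y ∂μH[D] ≠ ∞) :
    (r j : ℝ≥0∞) ^ D * ∫⁻ y in F, f y ∂μH[D] ≤ (C + L) * μH[D] F := by
  classical
  set I := ∫⁻ y in F, f y ∂μH[D]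
  set p : ι → ℝ≥0∞ := fun i ↦ (r i : ℝ≥0∞) ^ D
  set q := ∑ i ∈ Finset.univ.erase j, p i
  have hpq : p j + q ≤ 1 :=
    (Finset.add_sum_erase _ p (Finset.mem_univ j)).trans_le h.sum_coe_rpow_le_one
  have hj : ∫⁻ y in F, f (S j y) ∂μH[D] ≤ C * μH[D] F :=
    (setLIntegral_mono measurable_const hC).trans_eq (setLIntegral_const F C)
  have hi (i : ι) : ∫⁻ y in F, f (S i y) ∂μH[D] ≤ I + L * μH[D] F := by
    rw [← setLIntegral_const, ← lintegral_add_left hf]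
    exact lintegral_mono (hL i)
  rw [add_mul]
  refine mul_le_add_of_le_mul_add_mul_add hfin hpq ?_
  calc
    I ≤ ∑ i, p i * ∫⁻ y in F, f (S i y) ∂μH[D] := h.setLIntegral_le_sum hf
    _ = p j * ∫⁻ y in F, f (S j y) ∂μH[D] +
          ∑ i ∈ Finset.univ.erase j, p i * ∫⁻ y in F, f (S i y) ∂μH[D] :=
      (Finset.add_sum_erase _ _ (Finset.mem_univ j)).symm
    _ ≤ p j * (C * μH[D] F) + q * (I + L * μH[D] F) := by
      rw [Finset.sum_mul]
      gcongr
      exact hi _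

lemma rpow_mul_setLIntegral_le (h : IsSubSelfSimilar S r D F) (hF : μH[D] F ≠ ∞)
    {f : X → ℝ≥0∞} (hf : Measurable f) {C L : ℝ≥0∞} (hL : ∀ i y, f (S i y) ≤ f y + L) {j : ι}
    (hC : ∀ y ∈ F, f (S j y) ≤ C) :
    (r j : ℝ≥0∞) ^ D * ∫⁻ y in F, f y ∂μH[D] ≤ (C + L) * μH[D] F := by
  rw [lintegral_eq_iSup_lintegral_min_natCast hf, ENNReal.mul_iSup]
  refine iSup_le fun m ↦ h.rpow_mul_setLIntegral_le_of_ne_top (hf.min measurable_const) ?_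
    (fun y hy ↦ (min_le_left _ _).trans (hC y hy)) ?_
  · intro i y
    rw [← min_add_add_right]
    exact min_le_min (hL i y) le_self_add
  · refine ne_top_of_le_ne_top (ENNReal.mul_ne_top (ENNReal.natCast_ne_top m) hF) ?_
    rw [← setLIntegral_const]
    exact lintegral_mono fun y ↦ min_le_right _ _

theorem setLIntegral_lt_top_of_comp_le_add (h : IsSubSelfSimilar S r D F) (hr : ∀ i, r i < 1)
    (hF : Bornology.IsBounded F) {f : X → ℝ≥0∞} (hf : Measurable f) {l : ℝ≥0∞} (hl : l ≠ ∞)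
    (hfS : ∀ i y, f (S i y) ≤ f y + l) {x : X} (hx : x ∈ F) {C : ℝ≥0∞} (hC : C ≠ ∞)
    (hfx : ∀ᶠ y in 𝓝 x, f y ≤ C) : ∫⁻ y in F, f y ∂μH[D] < ∞ := by
  have hμF := (h.hausdorffMeasure_lt_top hr hF).ne
  obtain ⟨n, w, hw⟩ := h.exists_mapsTo_wordMap_of_mem_nhds hr hF hx hfx
  have hbound := (h.iterate n).rpow_mul_setLIntegral_le hμF hf (comp_wordMap_le_add hfS) hw
  have hp : ((∏ k, r (w k) : ℝ≥0) : ℝ≥0∞) ^ D ≠ 0 := by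
    rw [← ENNReal.coe_rpow_of_nonneg _ h.exponent_nonneg, ENNReal.coe_ne_zero]
    exact mt (NNReal.rpow_eq_zero_iff.1 · |>.1) ((h.iterate n).ratio_ne_zero w)
  refine ENNReal.lt_top_of_mul_ne_top_right (ne_top_of_le_ne_top ?_ hbound) hp
  finiteness

end HausdorffMeasure

end IsSubSelfSimilar

section InfDist

variable {X ι : Type*} [MetricSpace X] [MeasurableSpace X] [BorelSpace X] [Fintype ι]
  {S : ι → X → X} {r K : ι → ℝ≥0} {D : ℝ} {F J : Set X}

lemma setLIntegral_negLog_infDist_compl_lt_top (h : IsSubSelfSimilar S r D F) (hr : ∀ i, r i < 1)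
    (hF : Bornology.IsBounded F) (hS : ∀ i, AntilipschitzWith (K i) (S i))
    (hsurj : ∀ i, Function.Surjective (S i)) (hJ : Jᶜ.Nonempty) (hJS : ∀ i, MapsTo (S i) J J)
    (hFJ : (F ∩ interior J).Nonempty) : ∫⁻ y in F, negLog (infDist y Jᶜ) ∂μH[D] < ∞ := by
  obtain ⟨x, hxF, hxJ⟩ := hFJ
  obtain ⟨C, hC, hxC⟩ := exists_eventually_negLog_infDist_compl_le hJ hxJ
  set l : ι → ℝ≥0∞ := fun i ↦ ENNReal.ofReal (Real.log (K i))
  have hl : ∑ i, l i ≠ ∞ := ENNReal.sum_ne_top.2 fun i _ ↦ ENNReal.ofReal_ne_top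
  refine h.setLIntegral_lt_top_of_comp_le_add hr hF (measurable_negLog_infDist Jᶜ) hl
    (fun i y ↦ ?_) hxF hC hxC
  calc negLog (infDist (S i y) Jᶜ) ≤ negLog (infDist y Jᶜ) + l i :=
        negLog_le_add_of_le_mul (K i).coe_nonneg
          (infDist_compl_le_mul_infDist_compl (hS i) (hsurj i) (hJS i) hJ y)
    _ ≤ negLog (infDist y Jᶜ) + ∑ i, l i := by
        gcongr
        exact Finset.single_le_sum_of_canonicallyOrdered (Finset.mem_univ i)

theorem statement14_general (h : IsSubSelfSimilar S r D F) (hr : ∀ i, r i < 1)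
    (hF : Bornology.IsBounded F) (hS : ∀ i, AntilipschitzWith (K i) (S i))
    (hsurj : ∀ i, Function.Surjective (S i)) (hJ : Jᶜ.Nonempty) (hJS : ∀ i, MapsTo (S i) J J)
    (hFJ : (F ∩ interior J).Nonempty) :
    (∫⁻ y in F, ENNReal.ofReal |Real.log (infDist y Jᶜ)| ∂μH[D] < ∞) ∧
      ∀ᵐ y ∂μH[D].restrict F, 0 < infDist y Jᶜ := by
  have hmeas := measurable_negLog_infDist Jᶜ
  have hfin := setLIntegral_negLog_infDist_compl_lt_top h hr hF hS hsurj hJ hJS hFJ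
  refine ⟨?_, (ae_lt_top hmeas hfin.ne).mono fun y ↦ negLog_lt_top_iff.1⟩
  obtain ⟨z, hz⟩ := hJ
  obtain ⟨M, hM⟩ := hF.subset_closedBall z
  calc ∫⁻ y in F, ENNReal.ofReal |Real.log (infDist y Jᶜ)| ∂μH[D]
      ≤ ∫⁻ y in F, (negLog (infDist y Jᶜ) + ENNReal.ofReal (Real.log M)) ∂μH[D] :=
        setLIntegral_mono (hmeas.add_const _) fun y hy ↦
          ofReal_abs_log_le_negLog_add ((infDist_le_dist_of_mem hz).trans (hM hy))
    _ = ∫⁻ y in F, negLog (infDist y Jᶜ) ∂μH[D] + ENNReal.ofReal (Real.log M) * μH[D] F := by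
        rw [lintegral_add_left hmeas, setLIntegral_const]
    _ < ∞ := by
        have := h.hausdorffMeasure_lt_top hr hF
        finiteness

end InfDist

/-- Under the strong open set condition with respect to `J`, the
logarithm of the distance to the complement of `J` is `μ_F`-integrable:
`∫_F |ln d(y, ℝ^d ∖ J)| dμ_F(y) < ∞`, where `μ_F = H^D(F ∩ ·)/H^D(F)`; in
particular `d(y, ℝ^d ∖ J) > 0` for `μ_F`-almost every `y`. -/
theorem statement14 (d N : ℕ) (hd : 1 ≤ d) (hN : 2 ≤ N)
    (S : Fin N → EuclideanSpace ℝ (Fin d) → EuclideanSpace ℝ (Fin d))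
    (r : Fin N → ℝ) (hr : ∀ i, r i ∈ Set.Ioo (0 : ℝ) 1)
    (hS : ∀ i x y, dist (S i x) (S i y) = r i * dist x y)
    (F : Set (EuclideanSpace ℝ (Fin d)))
    (hF_ne : F.Nonempty) (hF_cpt : IsCompact F)
    (hF_self : F = ⋃ i, S i '' F)
    (D : ℝ) (hD : 0 < D) (hD_dim : ∑ i, r i ^ D = 1)
    (J : Set (EuclideanSpace ℝ (Fin d))) (hJ_cpt : IsCompact J)
    (hJ_reg : J = closure (interior J))
    (hJ_sub : ∀ i, S i '' J ⊆ J)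
    (hJ_disj : ∀ i j, i ≠ j → Disjoint (S i '' interior J) (S j '' interior J))
    (hSOSC : (F ∩ interior J).Nonempty) :
    (∫⁻ y, ENNReal.ofReal |Real.log (Metric.infDist y Jᶜ)|
        ∂((μH[D] F)⁻¹ • (μH[D] : Measure (EuclideanSpace ℝ (Fin d))).restrict F) < ⊤)
    ∧ (∀ᵐ y ∂((μH[D] F)⁻¹ •
          (μH[D] : Measure (EuclideanSpace ℝ (Fin d))).restrict F),
        0 < Metric.infDist y Jᶜ) := by
  have : Nonempty (Fin d) := ⟨⟨0, hd⟩⟩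
  obtain ⟨hint, hpos⟩ := statement14_general
    (.of_dist_eq_mul (fun i ↦ (hr i).1) hS hD.le hD_dim.le hF_self.subset)
    (fun i ↦ Real.toNNReal_lt_one.2 (hr i).2) hF_cpt.isBounded
    (fun i ↦ antilipschitzWith_toNNReal_inv_of_dist_eq_mul (hr i).1 (hS i))
    (fun i ↦ surjective_of_dist_eq_mul (hr i).1 (hS i)) (nonempty_compl.2 hJ_cpt.ne_univ)
    (fun i ↦ mapsTo_iff_image_subset.2 (hJ_sub i)) hSOSC
  exact ⟨lintegral_inv_smul_restrict_lt_top hint, Measure.ae_smul_measure hpos _⟩
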